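/- arXiv:2310.15444 — 3 statements merged into one kernel-verified Lean document; each statement's English description precedes it below -/
import Mathlib

section
/- Let Z be a measurable space, N ≥ 1, p ≥ 1, T ≥ 1, b > 0, and let g : ℝ^p × Z → ℝ^p be a measurable per-sample gradient map with sup_{θ,z} ‖g(θ,z)‖₁ ≤ L_adv. Let A be the noisy adversarial SGD kernel from Z^N to (ℝ^p)^T (outputting the joint law of the trajectory (θ₁,…,θ_T)). Then for every δ' ∈ (0,1), A is (ε, δ)-differentially private with ε = ε₀·√(2·T·log(N/δ')) + T·ε₀·(e^{ε₀} − 1), δ = δ'/N, and ε₀ = 2·L_adv/(N·b). -/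
open MeasureTheory

/-- Two datasets `S, S' ∈ Z^N` are neighboring if they differ in at most one
coordinate. -/
def Neighboring {Z : Type*} {N : ℕ} (S S' : Fin N → Z) : Prop :=
  ∃ i : Fin N, ∀ j : Fin N, j ≠ i → S j = S' j

/-- A randomized algorithm is `(ε,δ)`-differentially private if for all
neighboring datasets `S, S'` and every measurable set `E` of outputs,
`P(A(S) ∈ E) ≤ e^ε · P(A(S') ∈ E) + δ`. -/
def IsDP {Z : Type*} [MeasurableSpace Z] {N : ℕ} {Ω : Type*} [MeasurableSpace Ω]
    (A : (Fin N → Z) → Measure Ω) (ε δ : ℝ) : Prop :=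
  ∀ S S' : Fin N → Z, Neighboring S S' → ∀ E : Set Ω, MeasurableSet E →
    A S E ≤ ENNReal.ofReal (Real.exp ε) * A S' E + ENNReal.ofReal δ

/-- Density of the `d`-dimensional Laplace distribution `Lap(μ, b)` with respect
to Lebesgue measure: `(2b)^{-d}·exp(−‖x−μ‖₁/b)`. -/
noncomputable def lapDensity (d : ℕ) (μ : Fin d → ℝ) (b : ℝ) (x : Fin d → ℝ) : ℝ :=
  ((2 * b) ^ d)⁻¹ * Real.exp (-(∑ i, |x i - μ i|) / b)

/-- The averaged per-sample gradient `(1/N)·Σ_{i=1}^N g(θ, z_i)`. -/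
noncomputable def avgGrad {Z : Type*} {p N : ℕ}
    (g : (Fin p → ℝ) → Z → Fin p → ℝ) (θ : Fin p → ℝ) (S : Fin N → Z) :
    Fin p → ℝ :=
  fun i => (∑ j, g θ (S j) i) / N

/-- The iterate preceding step `t` in a trajectory `θ : Fin T → ℝ^p`
with initial point `θ₀`: it is `θ₀` for `t = 0` and `θ_{t-1}` otherwise. -/
def prevIter {p T : ℕ} (θ₀ : Fin p → ℝ) (θ : Fin T → Fin p → ℝ) (t : Fin T) :
    Fin p → ℝ :=
  if h : (t : ℕ) = 0 then θ₀
  else θ ⟨(t : ℕ) - 1, lt_of_le_of_lt (Nat.sub_le _ _) t.isLt⟩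

/-- Joint density (w.r.t. Lebesgue measure on `(ℝ^p)^T`) of the trajectory
`(θ₁,…,θ_T)` of noisy adversarial SGD: `θ_t = θ_{t-1} − η_t·G_t` with
`G_t ∼ Lap((1/N)·Σᵢ g(θ_{t-1}, zᵢ), b)` conditionally on `θ_{t-1}`.  Each factor
is the Laplace density of `G_t = (θ_{t-1} − θ_t)/η_t` times the Jacobian
`η_t^{-p}` of the change of variables. -/
noncomputable def sgdDensity {Z : Type*} (p N T : ℕ)
    (g : (Fin p → ℝ) → Z → Fin p → ℝ) (θ₀ : Fin p → ℝ) (η : Fin T → ℝ) (b : ℝ)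
    (S : Fin N → Z) (θ : Fin T → Fin p → ℝ) : ℝ :=
  ∏ t : Fin T,
    (η t ^ p)⁻¹ *
      lapDensity p (avgGrad g (prevIter θ₀ θ t) S) b
        (fun i => (prevIter θ₀ θ t i - θ t i) / η t)

/-- The noisy adversarial SGD kernel: the map sending a dataset `S ∈ Z^N` to the
joint law of the trajectory `(θ₁,…,θ_T) ∈ (ℝ^p)^T`. -/
noncomputable def sgdMeasure {Z : Type*} (p N T : ℕ)
    (g : (Fin p → ℝ) → Z → Fin p → ℝ) (θ₀ : Fin p → ℝ) (η : Fin T → ℝ) (b : ℝ)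
    (S : Fin N → Z) : Measure (Fin T → Fin p → ℝ) :=
  MeasureTheory.volume.withDensity
    (fun θ => ENNReal.ofReal (sgdDensity p N T g θ₀ η b S θ))


namespace SGDAux

lemma lap1 (b : ℝ) (hb : 0 < b) (e : ℝ) (he : 0 < e) (x m : ℝ) :
    ∫ y : ℝ, (e⁻¹ * (2 * b)⁻¹) * Real.exp (-|(x - y) / e - m| / b) = 1 := by
  rw [integral_const_mul]
  have h1 := integral_sub_left_eq_self (fun z : ℝ => Real.exp (-|z / e - m| / b)) volume x
  have h2 := Measure.integral_comp_div (fun z : ℝ => Real.exp (-|z - m| / b)) e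
  have h3 := integral_sub_right_eq_self (μ := volume) (fun z : ℝ => Real.exp (-|z| / b)) m
  have h4 := Measure.integral_comp_div (fun z : ℝ => Real.exp (-|z|)) b
  have h5 := integral_comp_abs (f := fun z : ℝ => Real.exp (-z))
  rw [integral_exp_neg_Ioi_zero] at h5
  beta_reduce at h1 h2 h3 h4 h5
  rw [h1, h2, h3]
  have h6 : ∀ z : ℝ, Real.exp (-|z| / b) = Real.exp (-|z / b|) := by
    intro z; rw [abs_div, abs_of_pos hb, neg_div]
  simp_rw [h6]
  rw [h4, h5, abs_of_pos hb, abs_of_pos he]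
  simp only [smul_eq_mul]
  field_simp

/-- one step density -/
noncomputable def q (p : ℕ) (e b : ℝ) (m x y : Fin p → ℝ) : ℝ :=
  (e ^ p)⁻¹ * lapDensity p m b (fun i => (x i - y i) / e)

lemma q_eq (p : ℕ) (e b : ℝ) (m x y : Fin p → ℝ) :
    q p e b m x y = ∏ i, (e⁻¹ * (2 * b)⁻¹) * Real.exp (-|(x i - y i) / e - m i| / b) := by
  unfold q lapDensity
  rw [Finset.prod_mul_distrib, ← Real.exp_sum, Finset.prod_const, Finset.card_univ,
    Fintype.card_fin, mul_pow e⁻¹, inv_pow, inv_pow, ← Finset.sum_div, Finset.sum_neg_distrib,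
    mul_assoc]

lemma q_int (p : ℕ) (e b : ℝ) (he : 0 < e) (hb : 0 < b) (m x : Fin p → ℝ) :
    ∫ y, q p e b m x y = 1 := by
  simp_rw [q_eq]
  rw [integral_fintype_prod_volume_eq_prod
    (fun i (y : ℝ) => (e⁻¹ * (2 * b)⁻¹) * Real.exp (-|(x i - y) / e - m i| / b))]
  exact Finset.prod_eq_one fun i _ => lap1 b hb e he _ _

lemma q_pos (p : ℕ) (e b : ℝ) (he : 0 < e) (hb : 0 < b) (m x y : Fin p → ℝ) :
    0 < q p e b m x y := by
  unfold q lapDensity; positivity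

lemma q_meas {α : Type*} [MeasurableSpace α] (p : ℕ) (e b : ℝ) (m x y : α → Fin p → ℝ)
    (hm : Measurable m) (hx : Measurable x) (hy : Measurable y) :
    Measurable (fun r => q p e b (m r) (x r) (y r)) := by
  unfold q lapDensity
  fun_prop

/-- one step privacy loss -/
noncomputable def X (p : ℕ) (e b : ℝ) (m m' x y : Fin p → ℝ) : ℝ :=
  ((∑ i, |(x i - y i) / e - m' i|) - ∑ i, |(x i - y i) / e - m i|) / b

lemma X_meas {α : Type*} [MeasurableSpace α] (p : ℕ) (e b : ℝ) (m m' x y : α → Fin p → ℝ)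
    (hm : Measurable m) (hm' : Measurable m') (hx : Measurable x) (hy : Measurable y) :
    Measurable (fun r => X p e b (m r) (m' r) (x r) (y r)) := by
  unfold X
  fun_prop

lemma q_X (p : ℕ) (e b : ℝ) (m m' x y : Fin p → ℝ) :
    q p e b m x y = q p e b m' x y * Real.exp (X p e b m m' x y) := by
  unfold q lapDensity X
  rw [mul_assoc, mul_assoc, ← Real.exp_add]
  congr 3
  ring

lemma X_bound (p : ℕ) (e b : ℝ) (hb : 0 < b) (m m' x y : Fin p → ℝ) (c : ℝ)
    (hc : (∑ i, |m i - m' i|) / b ≤ c) : |X p e b m m' x y| ≤ c := by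
  refine le_trans ?_ hc
  unfold X
  rw [abs_div, abs_of_pos hb]
  gcongr
  rw [← Finset.sum_sub_distrib]
  refine (Finset.abs_sum_le_sum_abs _ _).trans (Finset.sum_le_sum fun i _ => ?_)
  refine (abs_abs_sub_abs_le _ _).trans (le_of_eq ?_)
  congr 1; ring

lemma ptwise (x c : ℝ) (h : |x| ≤ c) :
    x ≤ c * (Real.exp c - 1) + 1 - Real.exp (-x) := by
  have h1 : Real.exp (-x) * (1 + x) ≤ 1 := by
    have := Real.add_one_le_exp x
    calc Real.exp (-x) * (1 + x) ≤ Real.exp (-x) * Real.exp x := by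
          gcongr; linarith
      _ = 1 := by rw [← Real.exp_add]; simp
  have h2 : x * (1 - Real.exp (-x)) ≤ |x| * (Real.exp |x| - 1) := by
    rcases le_total 0 x with hx | hx
    · rw [abs_of_nonneg hx]
      gcongr ?_ * ?_
      have := Real.add_one_le_exp x
      have := Real.add_one_le_exp (-x)
      linarith
    · rw [abs_of_nonpos hx]
      apply le_of_eq; ring
  have h3 : |x| * (Real.exp |x| - 1) ≤ c * (Real.exp c - 1) := by
    have : 0 ≤ Real.exp |x| - 1 := by
      have := Real.add_one_le_exp |x|
      have := abs_nonneg x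
      linarith
    have h0 := abs_nonneg x
    gcongr
    linarith
  nlinarith

lemma mgf_step {Ω : Type*} [MeasurableSpace Ω] (P : Measure Ω) [IsProbabilityMeasure P]
    (Y : Ω → ℝ) (hY : Measurable Y) (c : ℝ) (hc : ∀ w, |Y w| ≤ c)
    (hI : ∫ w, Real.exp (-Y w) ∂P = 1) (l : ℝ) (hl : 0 ≤ l) :
    ∫⁻ w, ENNReal.ofReal (Real.exp (l * Y w)) ∂P ≤
      ENNReal.ofReal (Real.exp (l * (c * (Real.exp c - 1)) + l ^ 2 * c ^ 2 / 2)) := by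
  have hmem : ∀ᵐ w ∂P, Y w ∈ Set.Icc (-c) c := .of_forall fun w => abs_le.1 (hc w)
  have hYi : Integrable Y P := Integrable.of_mem_Icc (-c) c hY.aemeasurable hmem
  have hei : Integrable (fun w => Real.exp (-Y w)) P := integrable_of_integral_eq_one hI
  have hmean : ∫ w, Y w ∂P ≤ c * (Real.exp c - 1) := by
    calc ∫ w, Y w ∂P ≤ ∫ w, (c * (Real.exp c - 1) + 1 - Real.exp (-Y w)) ∂P :=
          integral_mono hYi ((integrable_const _).sub hei) fun w => ptwise _ _ (hc w)
      _ = c * (Real.exp c - 1) := by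
          rw [integral_sub (integrable_const _) hei, hI]; simp
  have hs := ProbabilityTheory.hasSubgaussianMGF_of_mem_Icc hY.aemeasurable hmem
  have hm := hs.mgf_le l
  have hi := hs.integrable_exp_mul l
  set M := ∫ w, Y w ∂P
  have heq : ∀ w, Real.exp (l * Y w) = Real.exp (l * M) * Real.exp (l * (Y w - M)) := by
    intro w; rw [← Real.exp_add]; congr 1; ring
  simp_rw [heq]
  rw [← ofReal_integral_eq_lintegral_ofReal (hi.const_mul _) (.of_forall fun w => by positivity),
    integral_const_mul]
  apply ENNReal.ofReal_le_ofReal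
  rw [Real.exp_add]
  have hcc : (((‖c - -c‖₊ / 2) ^ 2 : NNReal) : ℝ) = c ^ 2 := by
    push_cast
    rw [Real.norm_eq_abs, div_pow, sq_abs]; ring
  rw [hcc] at hm
  unfold ProbabilityTheory.mgf at hm
  gcongr
  refine hm.trans (le_of_eq ?_)
  congr 1; ring

lemma step (p : ℕ) (e b : ℝ) (he : 0 < e) (hb : 0 < b) (m m' x : Fin p → ℝ) (c : ℝ)
    (hc : (∑ i, |m i - m' i|) / b ≤ c) (l : ℝ) (hl : 0 ≤ l) :
    ∫⁻ y, ENNReal.ofReal (q p e b m x y * Real.exp (l * X p e b m m' x y)) ≤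
      ENNReal.ofReal (Real.exp (l * (c * (Real.exp c - 1)) + l ^ 2 * c ^ 2 / 2)) := by
  have hqm : ∀ m : Fin p → ℝ, Measurable (fun y => q p e b m x y) := fun m =>
    q_meas p e b (fun _ => m) (fun _ => x) (fun y => y) measurable_const measurable_const measurable_id
  have hXm : Measurable (fun y => X p e b m m' x y) :=
    X_meas p e b (fun _ => m) (fun _ => m') (fun _ => x) (fun y => y)
      measurable_const measurable_const measurable_const measurable_id
  have hne : Measurable (fun y => Real.exp (-X p e b m m' x y)) := hXm.neg.exp
  have hle : Measurable (fun y => Real.exp (l * X p e b m m' x y)) := (hXm.const_mul l).exp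
  have hq1 : ∀ m : Fin p → ℝ, ∫⁻ y, ENNReal.ofReal (q p e b m x y) = 1 := by
    intro m
    rw [← ofReal_integral_eq_lintegral_ofReal (integrable_of_integral_eq_one (q_int p e b he hb m x))
      (.of_forall fun y => (q_pos p e b he hb m x y).le), q_int p e b he hb, ENNReal.ofReal_one]
  let P : Measure (Fin p → ℝ) := volume.withDensity (fun y => ENNReal.ofReal (q p e b m x y))
  have hP : IsProbabilityMeasure P := ⟨by
    simp only [P]
    rw [withDensity_apply _ MeasurableSet.univ, Measure.restrict_univ, hq1]⟩
  have key := mgf_step P (fun y => X p e b m m' x y) hXm c (fun y => X_bound p e b hb m m' x y c hc)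
    ?_ l hl
  · refine le_trans (le_of_eq ?_) key
    simp only [P]
    rw [lintegral_withDensity_eq_lintegral_mul _ (hqm m).ennreal_ofReal hle.ennreal_ofReal]
    refine lintegral_congr fun y => ?_
    rw [Pi.mul_apply, ENNReal.ofReal_mul (q_pos p e b he hb m x y).le]
  · rw [integral_eq_lintegral_of_nonneg_ae (.of_forall fun y => (Real.exp_pos _).le)
      hne.aestronglyMeasurable]
    simp only [P]
    rw [lintegral_withDensity_eq_lintegral_mul _ (hqm m).ennreal_ofReal hne.ennreal_ofReal]
    have : ∀ y, ((fun y => ENNReal.ofReal (q p e b m x y)) * fun y =>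
        ENNReal.ofReal (Real.exp (-X p e b m m' x y))) y = ENNReal.ofReal (q p e b m' x y) := by
      intro y
      rw [Pi.mul_apply, ← ENNReal.ofReal_mul (q_pos p e b he hb m x y).le, q_X p e b m m',
        mul_assoc, ← Real.exp_add]
      simp
    rw [lintegral_congr this, hq1]; simp

lemma prev_meas {p T : ℕ} (t : Fin T) :
    Measurable (fun r : (Fin p → ℝ) × (Fin T → Fin p → ℝ) => prevIter r.1 r.2 t) := by
  unfold prevIter
  split_ifs <;> fun_prop

lemma prod_meas {β : Type*} [MeasurableSpace β] [CommMonoid β] [MeasurableMul₂ β]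
    {p T : ℕ} (F : Fin T → (Fin p → ℝ) → (Fin p → ℝ) → β)
    (hF : ∀ t, Measurable (fun r : (Fin p → ℝ) × (Fin p → ℝ) => F t r.1 r.2)) (x0 : Fin p → ℝ) :
    Measurable (fun θ : Fin T → Fin p → ℝ => ∏ t, F t (prevIter x0 θ t) (θ t)) := by
  refine Finset.measurable_prod _ fun t _ => ?_
  have h1 : Measurable (fun θ : Fin T → Fin p → ℝ => prevIter x0 θ t) :=
    (prev_meas t).comp (by fun_prop : Measurable (fun θ : Fin T → Fin p → ℝ => (x0, θ)))
  exact (hF t).comp (h1.prodMk (measurable_pi_apply t))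

lemma chain (p : ℕ) (C : ENNReal) : ∀ (T : ℕ) (F : Fin T → (Fin p → ℝ) → (Fin p → ℝ) → ENNReal)
    (_ : ∀ t, Measurable (fun r : (Fin p → ℝ) × (Fin p → ℝ) => F t r.1 r.2))
    (_ : ∀ t x, ∫⁻ y, F t x y ≤ C) (x0 : Fin p → ℝ),
    ∫⁻ θ : Fin T → Fin p → ℝ, ∏ t, F t (prevIter x0 θ t) (θ t) ≤ C ^ T := by
  intro T
  induction T with
  | zero =>
    intro F _ _ x0
    simp [volume_pi, Measure.pi_of_empty]
  | succ n ih =>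
    intro F hF hC x0
    have mp := (volume_preserving_piFinSuccAbove (fun _ : Fin (n + 1) => Fin p → ℝ) 0).symm
    rw [← mp.lintegral_comp_emb (MeasurableEquiv.measurableEmbedding _)]
    have hpt : ∀ r : (Fin p → ℝ) × (Fin n → Fin p → ℝ),
        ∏ t, F t (prevIter x0 ((MeasurableEquiv.piFinSuccAbove
          (fun _ : Fin (n + 1) => Fin p → ℝ) 0).symm r) t) (((MeasurableEquiv.piFinSuccAbove
          (fun _ : Fin (n + 1) => Fin p → ℝ) 0).symm r) t) =
        F 0 x0 r.1 * ∏ t : Fin n, F t.succ (prevIter r.1 r.2 t) (r.2 t) := by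
      rintro ⟨x, θ⟩
      have : (MeasurableEquiv.piFinSuccAbove
          (fun _ : Fin (n + 1) => Fin p → ℝ) 0).symm (x, θ) = Fin.cons x θ := by
        simp [MeasurableEquiv.piFinSuccAbove, Fin.insertNthEquiv]
      rw [this, Fin.prod_univ_succ]
      congr 1
      refine Finset.prod_congr rfl fun t _ => ?_
      rw [Fin.cons_succ]
      congr 1
      obtain ⟨t, ht⟩ := t
      cases t with
      | zero => simp [prevIter]
      | succ k =>
        simp only [prevIter, Fin.succ_mk]
        simp
        rfl
    rw [lintegral_congr hpt, Measure.volume_eq_prod]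
    have hprod : Measurable (fun r : (Fin p → ℝ) × (Fin n → Fin p → ℝ) =>
        ∏ t : Fin n, F t.succ (prevIter r.1 r.2 t) (r.2 t)) := by
      refine Finset.measurable_prod _ fun t _ => ?_
      exact (hF t.succ).comp ((prev_meas t).prodMk (by fun_prop))
    have h0 : Measurable (fun x => F 0 x0 x) :=
      (hF 0).comp (by fun_prop : Measurable (fun x : Fin p → ℝ => (x0, x)))
    have hall : Measurable (fun r : (Fin p → ℝ) × (Fin n → Fin p → ℝ) =>
        F 0 x0 r.1 * ∏ t : Fin n, F t.succ (prevIter r.1 r.2 t) (r.2 t)) :=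
      (h0.comp measurable_fst).mul hprod
    rw [lintegral_prod _ hall.aemeasurable]
    calc _ ≤ ∫⁻ x, F 0 x0 x * C ^ n := by
          refine lintegral_mono fun x => ?_
          simp only
          have hsec : Measurable (fun θ : Fin n → Fin p → ℝ =>
              ∏ t : Fin n, F t.succ (prevIter x θ t) (θ t)) := hprod.comp (by fun_prop :
            Measurable (fun θ : Fin n → Fin p → ℝ => (x, θ)))
          rw [lintegral_const_mul _ hsec]
          gcongr
          exact ih (fun t => F t.succ) (fun t => hF _) (fun t => hC _) x
      _ ≤ C * C ^ n := by
          rw [lintegral_mul_const _ h0]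
          gcongr
          exact hC 0 x0
      _ = C ^ (n + 1) := by ring

lemma avg_bound {Z : Type*} {p N : ℕ} (hN : 1 ≤ N) (b : ℝ) (hb : 0 < b) (L : ℝ)
    (g : (Fin p → ℝ) → Z → Fin p → ℝ) (hL : ∀ θ z, ∑ i, |g θ z i| ≤ L)
    (S S' : Fin N → Z) (h : Neighboring S S') (x : Fin p → ℝ) :
    (∑ i, |avgGrad g x S i - avgGrad g x S' i|) / b ≤ 2 * L / (N * b) := by
  obtain ⟨k, hk⟩ := h
  have hN' : (0 : ℝ) < N := by exact_mod_cast hN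
  have h1 : ∀ i, |avgGrad g x S i - avgGrad g x S' i| ≤
      (|g x (S k) i| + |g x (S' k) i|) / N := by
    intro i
    unfold avgGrad
    rw [← sub_div, abs_div, abs_of_pos hN', ← Finset.sum_sub_distrib,
      Finset.sum_eq_single k]
    · gcongr; exact abs_sub _ _
    · intro j _ hj; rw [hk j hj]; simp
    · simp
  have h2 : ∑ i, |avgGrad g x S i - avgGrad g x S' i| ≤ 2 * L / N := by
    refine (Finset.sum_le_sum fun i _ => h1 i).trans ?_
    rw [← Finset.sum_div, Finset.sum_add_distrib]
    gcongr
    linarith [hL x (S k), hL x (S' k)]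
  rw [← div_div]
  gcongr

end SGDAux

/-- the noisy adversarial SGD kernel, with `T` iterations, noise
scale `b > 0` and per-sample gradient map `g` of ℓ1-norm at most `L_adv`, is
`(ε, δ)`-differentially private with `ε = ε₀·√(2·T·log(N/δ')) + T·ε₀·(e^{ε₀}−1)`,
`δ = δ'/N` and `ε₀ = 2·L_adv/(N·b)`, for every `δ' ∈ (0,1)`. -/
theorem stmt1 {Z : Type*} [MeasurableSpace Z] (N p T : ℕ)
    (hN : 1 ≤ N) (hp : 1 ≤ p) (hT : 1 ≤ T)
    (b : ℝ) (hb : 0 < b) (Ladv : ℝ)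
    (g : (Fin p → ℝ) → Z → Fin p → ℝ)
    (hg : Measurable (fun q : (Fin p → ℝ) × Z => g q.1 q.2))
    (hL : ∀ θ z, ∑ i, |g θ z i| ≤ Ladv)
    (θ₀ : Fin p → ℝ) (η : Fin T → ℝ) (hη : ∀ t, 0 < η t)
    (δ' : ℝ) (hδ' : δ' ∈ Set.Ioo (0 : ℝ) 1) :
    IsDP (sgdMeasure p N T g θ₀ η b)
      (2 * Ladv / (N * b) * Real.sqrt (2 * T * Real.log (N / δ')) +
        T * (2 * Ladv / (N * b)) * (Real.exp (2 * Ladv / (N * b)) - 1))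
      (δ' / N) := by
  intro S S' hSS E hE
  have hN' : (0 : ℝ) < N := by exact_mod_cast hN
  have hT' : (0 : ℝ) < T := by exact_mod_cast hT
  obtain ⟨hd0, hd1⟩ := hδ'
  have hbound := SGDAux.avg_bound hN b hb Ladv g hL S S' hSS
  set c : ℝ := 2 * Ladv / (N * b) with hcdef
  have hc0 : 0 ≤ c := le_trans (by positivity) (hbound θ₀)
  set ε : ℝ := c * Real.sqrt (2 * T * Real.log (N / δ')) + T * c * (Real.exp c - 1) with hε
  have hlog : 0 < Real.log (N / δ') := by
    apply Real.log_pos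
    rw [lt_div_iff₀ hd0]
    have : (1 : ℝ) ≤ N := by exact_mod_cast hN
    linarith
  set s := Real.sqrt (2 * T * Real.log (N / δ')) with hs
  have hs2 : s ^ 2 = 2 * T * Real.log (N / δ') := Real.sq_sqrt (by positivity)
  have hs0 : 0 ≤ s := Real.sqrt_nonneg _
  set l : ℝ := s / (T * c) with hl
  have hl0 : 0 ≤ l := by positivity
  have hεnn : 0 ≤ ε := by
    have : 0 ≤ Real.exp c - 1 := by linarith [Real.add_one_le_exp c]
    positivity
  -- measurability of the averaged gradient
  have hgm : ∀ S : Fin N → Z, Measurable (fun x => avgGrad g x S) := by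
    intro S
    unfold avgGrad
    refine measurable_pi_lambda _ fun i => ?_
    refine Measurable.div_const (Finset.measurable_sum _ fun j _ => ?_) _
    exact (measurable_pi_apply i).comp
      (hg.comp (by fun_prop : Measurable (fun x : Fin p → ℝ => (x, S j))))
  let Q : (Fin N → Z) → Fin T → (Fin p → ℝ) → (Fin p → ℝ) → ℝ :=
    fun S t x y => SGDAux.q p (η t) b (avgGrad g x S) x y
  let X : Fin T → (Fin p → ℝ) → (Fin p → ℝ) → ℝ :=
    fun t x y => SGDAux.X p (η t) b (avgGrad g x S) (avgGrad g x S') x y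
  have hQm : ∀ S t, Measurable (fun r : (Fin p → ℝ) × (Fin p → ℝ) => Q S t r.1 r.2) := by
    intro S t
    exact SGDAux.q_meas p (η t) b (fun r : (Fin p → ℝ) × (Fin p → ℝ) => avgGrad g r.1 S)
      (fun r => r.1) (fun r => r.2) ((hgm S).comp measurable_fst) measurable_fst measurable_snd
  have hXm : ∀ t, Measurable (fun r : (Fin p → ℝ) × (Fin p → ℝ) => X t r.1 r.2) := by
    intro t
    exact SGDAux.X_meas p (η t) b (fun r : (Fin p → ℝ) × (Fin p → ℝ) => avgGrad g r.1 S)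
      (fun r => avgGrad g r.1 S') (fun r => r.1) (fun r => r.2)
      ((hgm S).comp measurable_fst) ((hgm S').comp measurable_fst) measurable_fst measurable_snd
  have hQpos : ∀ S t x y, 0 < Q S t x y := fun S t x y => SGDAux.q_pos p _ b (hη t) hb _ _ _
  have hdens : ∀ S θ, sgdDensity p N T g θ₀ η b S θ = ∏ t, Q S t (prevIter θ₀ θ t) (θ t) :=
    fun _ _ => rfl
  have hdpos : ∀ S θ, 0 < sgdDensity p N T g θ₀ η b S θ := by
    intro S θ; rw [hdens]; exact Finset.prod_pos fun t _ => hQpos _ _ _ _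
  have hdm : ∀ S, Measurable (fun θ => sgdDensity p N T g θ₀ η b S θ) := by
    intro S
    exact SGDAux.prod_meas (Q S) (hQm S) θ₀
  let Lo : (Fin T → Fin p → ℝ) → ℝ := fun θ => ∑ t, X t (prevIter θ₀ θ t) (θ t)
  have hLo : ∀ θ, sgdDensity p N T g θ₀ η b S θ =
      sgdDensity p N T g θ₀ η b S' θ * Real.exp (Lo θ) := by
    intro θ
    simp only [hdens, Lo]
    rw [Real.exp_sum, ← Finset.prod_mul_distrib]
    exact Finset.prod_congr rfl fun t _ => SGDAux.q_X _ _ _ _ _ _ _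
  have hpt : ∀ θ, ENNReal.ofReal (sgdDensity p N T g θ₀ η b S θ) ≤
      ENNReal.ofReal (Real.exp ε) * ENNReal.ofReal (sgdDensity p N T g θ₀ η b S' θ) +
      (if c = 0 then 0 else ENNReal.ofReal (Real.exp (-(l * ε))) *
        ∏ t, ENNReal.ofReal (Q S t (prevIter θ₀ θ t) (θ t) *
          Real.exp (l * X t (prevIter θ₀ θ t) (θ t)))) := by
    intro θ
    by_cases hle : Lo θ ≤ ε
    · refine le_trans ?_ le_self_add
      rw [← ENNReal.ofReal_mul (by positivity)]
      apply ENNReal.ofReal_le_ofReal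
      rw [hLo θ, mul_comm]
      have := hdpos S' θ
      gcongr
    · have hcne : c ≠ 0 := by
        intro h0
        apply hle
        have : Lo θ = 0 := by
          refine Finset.sum_eq_zero fun t _ => ?_
          have := SGDAux.X_bound p (η t) b hb _ _ (prevIter θ₀ θ t) (θ t) c
            (hbound (prevIter θ₀ θ t))
          rw [h0] at this
          exact abs_nonpos_iff.1 this
        rw [this]; exact hεnn
      rw [if_neg hcne]
      refine le_trans ?_ le_add_self
      rw [← ENNReal.ofReal_prod_of_nonneg
        (fun t _ => mul_nonneg (hQpos _ _ _ _).le (Real.exp_pos _).le),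
        ← ENNReal.ofReal_mul (by positivity)]
      apply ENNReal.ofReal_le_ofReal
      rw [Finset.prod_mul_distrib, ← hdens, ← Real.exp_sum, ← Finset.mul_sum]
      have h1 : 1 ≤ Real.exp (-(l * ε)) * Real.exp (l * Lo θ) := by
        rw [← Real.exp_add]
        apply Real.one_le_exp
        push Not at hle
        nlinarith [mul_le_mul_of_nonneg_left hle.le hl0]
      have := hdpos S θ
      calc _ = sgdDensity p N T g θ₀ η b S θ * 1 := by ring
        _ ≤ sgdDensity p N T g θ₀ η b S θ * (Real.exp (-(l * ε)) * Real.exp (l * Lo θ)) := by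
          gcongr
        _ = _ := by ring
  unfold sgdMeasure
  rw [withDensity_apply _ hE, withDensity_apply _ hE]
  refine (lintegral_mono hpt).trans ?_
  rw [lintegral_add_left ((hdm S').ennreal_ofReal.const_mul _),
    lintegral_const_mul _ (hdm S').ennreal_ofReal]
  gcongr
  by_cases hcz : c = 0
  · simp [hcz]
  simp only [if_neg hcz]
  have hcpos : 0 < c := lt_of_le_of_ne hc0 (Ne.symm hcz)
  have hFm : ∀ t, Measurable (fun r : (Fin p → ℝ) × (Fin p → ℝ) =>
      ENNReal.ofReal (Q S t r.1 r.2 * Real.exp (l * X t r.1 r.2))) := fun t =>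
    ((hQm S t).mul ((hXm t).const_mul l).exp).ennreal_ofReal
  refine (setLIntegral_le_lintegral _ _).trans ?_
  rw [lintegral_const_mul _ (SGDAux.prod_meas
    (fun t x y => ENNReal.ofReal (Q S t x y * Real.exp (l * X t x y))) hFm θ₀)]
  have hch := SGDAux.chain p _ T
    (fun t x y => ENNReal.ofReal (Q S t x y * Real.exp (l * X t x y))) hFm
    (fun t x => SGDAux.step p (η t) b (hη t) hb _ _ x c (hbound x) l hl0) θ₀
  refine (mul_le_mul_right hch _).trans ?_
  rw [← ENNReal.ofReal_pow (by positivity), ← ENNReal.ofReal_mul (by positivity)]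
  apply ENNReal.ofReal_le_ofReal
  rw [← Real.exp_nat_mul, ← Real.exp_add]
  have hfin : -(l * ε) + T * (l * (c * (Real.exp c - 1)) + l ^ 2 * c ^ 2 / 2) =
      -Real.log (N / δ') := by
    have h1 : -(l * ε) + T * (l * (c * (Real.exp c - 1)) + l ^ 2 * c ^ 2 / 2) =
        - (s ^ 2) / (2 * T) := by
      rw [hε, hl]; field_simp; ring
    rw [h1, hs2]; field_simp
  rw [hfin, Real.exp_neg, Real.exp_log (by positivity), inv_div]
end

section
/- (Adaptive strong composition, as used in Eq. (13) of the paper.) Let Z be a measurable space, N ≥ 1, T ≥ 1, ε₀ ≥ 0, and δ̂ ∈ (0,1). Let X₁,…,X_T be measurable spaces and, for each t = 1,…,T, let κ_t be a Markov kernel from Z^N × (X₁ × ⋯ × X_{t−1}) to X_t such that for every fixed history (o₁,…,o_{t−1}), the kernel S ↦ κ_t(S, o₁,…,o_{t−1}) is (ε₀, 0)-differentially private. Then the adaptively composed kernel from Z^N to X₁ × ⋯ × X_T, sending S to the joint law of (O₁,…,O_T) where O_t ∼ κ_t(S, O₁,…,O_{t−1}), is (ε, δ̂)-differentially private with ε =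 ε₀·√(2·T·log(1/δ̂)) + T·ε₀·(e^{ε₀} − 1). -/
open MeasureTheory

/-- Adaptive composition of the kernels `κ_t` on a dataset `S`: the joint law of
`(O₁,…,O_T)` where `O_t ∼ κ_t(S, O₁,…,O_{t−1})`, built by recursion on `T` via
`bind` and `Fin.snoc`. -/
noncomputable def composedMeasure {Z : Type*} [MeasurableSpace Z] {N : ℕ}
    (X : ℕ → Type*) [∀ t, MeasurableSpace (X t)]
    (κ : ∀ t : ℕ, (Fin N → Z) → (∀ s : Fin t, X s) → Measure (X t))
    (S : Fin N → Z) : ∀ T : ℕ, Measure (∀ t : Fin T, X t)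
  | 0 => Measure.dirac (fun s => s.elim0)
  | (T + 1) =>
      (composedMeasure X κ S T).bind
        (fun h => (κ T S h).map
          (fun x => @Fin.snoc T (fun i : Fin (T + 1) => X i) h x))

/-- One-step moment bound: exponential moments of a bounded privacy loss. -/
lemma one_step_moment {Y : Type*} [MeasurableSpace Y] (ν : Measure Y) [IsProbabilityMeasure ν]
    (ε : ℝ) (hε : 0 ≤ ε) (l : Y → ℝ) (hl : Measurable l) (hb : ∀ y, l y ∈ Set.Icc (-ε) ε)
    (h1 : ∫⁻ y, ENNReal.ofReal (Real.exp (l y)) ∂ν = 1) (c : ℝ) (hc : 0 ≤ c) :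
    ∫⁻ y, ENNReal.ofReal (Real.exp (l y)) * ENNReal.ofReal (Real.exp (c * l y)) ∂ν ≤
      ENNReal.ofReal (Real.exp (c * (ε * (Real.exp ε - 1)) + c ^ 2 * ε ^ 2 / 2)) := by
  have hme : Measurable fun y => ENNReal.ofReal (Real.exp (l y)) := by fun_prop
  set μ := ν.withDensity (fun y => ENNReal.ofReal (Real.exp (l y))) with hμ
  have : IsProbabilityMeasure μ := ⟨by rw [hμ, withDensity_apply _ MeasurableSet.univ]; simpa using h1⟩
  have hsub := ProbabilityTheory.hasSubgaussianMGF_of_mem_Icc (μ := μ) hl.aemeasurable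
    (Filter.Eventually.of_forall hb)
  have hmean : ∫ y, l y ∂μ ≤ ε * (Real.exp ε - 1) := by
    rw [hμ, integral_withDensity_eq_integral_toReal_smul hme (by simp)]
    have hexpb : ∀ y, Real.exp (l y) ∈ Set.Icc (0 : ℝ) (Real.exp ε) := fun y =>
      ⟨(Real.exp_pos _).le, Real.exp_le_exp.2 (hb y).2⟩
    have hint : Integrable (fun y => Real.exp (l y)) ν :=
      Integrable.of_mem_Icc _ _ (by fun_prop) (Filter.Eventually.of_forall hexpb)
    have hI : ∫ y, Real.exp (l y) ∂ν = 1 := by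
      rw [integral_eq_lintegral_of_nonneg_ae (Filter.Eventually.of_forall fun y => (Real.exp_pos _).le)
        (by fun_prop), h1]
      simp
    have hle : ∀ y, (ENNReal.ofReal (Real.exp (l y))).toReal • l y ≤
        (Real.exp (l y) - 1) + ε * (Real.exp ε - 1) := by
      intro y
      rw [ENNReal.toReal_ofReal (Real.exp_pos _).le, smul_eq_mul]
      obtain ⟨h1, h2⟩ := hb y
      have e1 : l y ≤ Real.exp (l y) - 1 := by linarith [Real.add_one_le_exp (l y)]
      have e2 : (Real.exp (l y) - 1) * l y ≤ ε * (Real.exp ε - 1) := by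
        have e3 : 0 ≤ Real.exp ε - 1 := by linarith [Real.add_one_le_exp ε]
        rcases le_total 0 (l y) with h0 | h0
        · have : Real.exp (l y) ≤ Real.exp ε := Real.exp_le_exp.2 h2
          have : 0 ≤ Real.exp (l y) - 1 := by linarith
          nlinarith
        · have : 1 - Real.exp (l y) ≤ Real.exp ε - 1 := by
            have a1 : Real.exp (-ε) ≤ Real.exp (l y) := Real.exp_le_exp.2 h1
            have a2 : Real.exp ε * Real.exp (-ε) = 1 := by rw [← Real.exp_add]; simp
            nlinarith [Real.exp_pos (-ε), sq_nonneg (Real.exp ε - 1)]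
          have h3 : Real.exp (l y) ≤ 1 := Real.exp_le_one_iff.2 h0
          nlinarith
      nlinarith
    have hint2 : Integrable (fun y => (ENNReal.ofReal (Real.exp (l y))).toReal • l y) ν := by
      have := (Integrable.of_mem_Icc (μ := ν) _ _ hl.aemeasurable (Filter.Eventually.of_forall hb))
      refine this.bdd_mul (c := Real.exp ε) hme.ennreal_toReal.aestronglyMeasurable (Filter.Eventually.of_forall fun y => ?_)
      rw [ENNReal.toReal_ofReal (Real.exp_pos _).le, Real.norm_eq_abs, abs_of_pos (Real.exp_pos _)]
      exact (hexpb y).2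
    calc _ ≤ ∫ y, ((Real.exp (l y) - 1) + ε * (Real.exp ε - 1)) ∂ν :=
          integral_mono hint2 ((hint.sub (integrable_const _)).add (integrable_const _)) hle
      _ = _ := by
          have hint3 : Integrable (fun y => Real.exp (l y) - 1) ν := hint.sub (integrable_const _)
          rw [integral_add hint3 (integrable_const _),
            integral_sub hint (integrable_const _), hI]
          simp
  have hm := hsub.mgf_le c
  have hin := hsub.integrable_exp_mul c
  set m := ∫ y, l y ∂μ with hmdef
  have hnn : (((‖ε - -ε‖₊ / 2) ^ 2 : NNReal) : ℝ) = ε ^ 2 := by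
    have : ε - -ε = 2 * ε := by ring
    push_cast
    rw [this, Real.norm_eq_abs, abs_of_nonneg (by linarith)]
    ring
  rw [hnn, ProbabilityTheory.mgf] at hm
  have key : ∫⁻ y, ENNReal.ofReal (Real.exp (c * l y)) ∂μ ≤
      ENNReal.ofReal (Real.exp (c * m + c ^ 2 * ε ^ 2 / 2)) := by
    have hpt : ∀ y, ENNReal.ofReal (Real.exp (c * l y)) =
        ENNReal.ofReal (Real.exp (c * m)) * ENNReal.ofReal (Real.exp (c * (l y - m))) := by
      intro y
      rw [← ENNReal.ofReal_mul (Real.exp_pos _).le, ← Real.exp_add]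
      congr 2; ring
    simp_rw [hpt]
    rw [lintegral_const_mul _ (by fun_prop),
      ← ofReal_integral_eq_lintegral_ofReal hin (Filter.Eventually.of_forall fun y => (Real.exp_pos _).le),
      ← ENNReal.ofReal_mul (Real.exp_pos _).le, Real.exp_add]
    apply ENNReal.ofReal_le_ofReal
    gcongr
    calc _ ≤ _ := hm
      _ = _ := by congr 1; ring
  have hconv : ∫⁻ y, ENNReal.ofReal (Real.exp (l y)) * ENNReal.ofReal (Real.exp (c * l y)) ∂ν =
      ∫⁻ y, ENNReal.ofReal (Real.exp (c * l y)) ∂μ := by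
    rw [hμ, lintegral_withDensity_eq_lintegral_mul _ hme (by fun_prop)]
    rfl
  rw [hconv]
  refine key.trans (ENNReal.ofReal_le_ofReal (Real.exp_le_exp.2 ?_))
  gcongr

/-- `P` has a density `exp L` with respect to `Q`, with `L` bounded and with controlled
exponential moments. -/
def GoodPair {Ω : Type*} [MeasurableSpace Ω] (P Q : Measure Ω) (ε : ℝ) (n : ℕ) : Prop :=
  ∃ L : Ω → ℝ, Measurable L ∧ (∀ ω, L ω ≤ n * ε) ∧
    P = Q.withDensity (fun ω => ENNReal.ofReal (Real.exp (L ω))) ∧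
    ∀ c : ℝ, 0 ≤ c → ∫⁻ ω, ENNReal.ofReal (Real.exp (c * L ω)) ∂P ≤
      ENNReal.ofReal (Real.exp (n * (c * (ε * (Real.exp ε - 1)) + c ^ 2 * ε ^ 2 / 2)))

/-- Mutual domination of measures gives a bounded log-density. -/
lemma exists_log_density {Ω : Type*} [MeasurableSpace Ω] (P R : Measure Ω)
    [IsFiniteMeasure P] [IsFiniteMeasure R] (ε : ℝ) (hε : 0 ≤ ε)
    (h1 : ∀ E, MeasurableSet E → P E ≤ ENNReal.ofReal (Real.exp ε) * R E)
    (h2 : ∀ E, MeasurableSet E → R E ≤ ENNReal.ofReal (Real.exp ε) * P E) :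
    ∃ l : Ω → ℝ, Measurable l ∧ (∀ ω, l ω ∈ Set.Icc (-ε) ε) ∧
      P = R.withDensity (fun ω => ENNReal.ofReal (Real.exp (l ω))) := by
  have hac : P ≪ R := Measure.AbsolutelyContinuous.mk fun s hs h0 => by
    have := h1 s hs
    rw [h0] at this
    simpa using this
  have hg := Measure.measurable_rnDeriv P R
  have hset : ∀ s, ∫⁻ x in s, P.rnDeriv R x ∂(R) = P s := fun s =>
    Measure.setLIntegral_rnDeriv hac s
  have hup : P.rnDeriv R ≤ᵐ[R] fun _ => ENNReal.ofReal (Real.exp ε) := by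
    refine ae_le_of_forall_setLIntegral_le_of_sigmaFinite hg fun s hs _ => ?_
    rw [hset, setLIntegral_const]
    exact h1 s hs
  have hlo : (fun _ => ENNReal.ofReal (Real.exp (-ε))) ≤ᵐ[R] P.rnDeriv R := by
    refine ae_le_of_forall_setLIntegral_le_of_sigmaFinite measurable_const fun s hs _ => ?_
    rw [hset, setLIntegral_const]
    calc _ ≤ ENNReal.ofReal (Real.exp (-ε)) * (ENNReal.ofReal (Real.exp ε) * P s) := by
          gcongr; exact h2 s hs
      _ = P s := by
          rw [← mul_assoc, ← ENNReal.ofReal_mul (Real.exp_pos _).le, ← Real.exp_add]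
          simp
  refine ⟨fun ω => max (-ε) (min ε (Real.log (P.rnDeriv R ω).toReal)), by fun_prop,
    fun ω => ⟨le_max_left _ _, max_le (by linarith) (min_le_left _ _)⟩, ?_⟩
  conv_lhs => rw [← Measure.withDensity_rnDeriv_eq P R hac]
  refine withDensity_congr_ae ?_
  filter_upwards [hup, hlo] with ω hu hl
  have hne : P.rnDeriv R ω ≠ ⊤ := (hu.trans_lt ENNReal.ofReal_lt_top).ne
  have hu' : (P.rnDeriv R ω).toReal ≤ Real.exp ε :=
    ENNReal.toReal_le_of_le_ofReal (Real.exp_pos _).le hu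
  have hl' : Real.exp (-ε) ≤ (P.rnDeriv R ω).toReal :=
    (ENNReal.ofReal_le_iff_le_toReal hne).1 hl
  have hpos : 0 < (P.rnDeriv R ω).toReal := (Real.exp_pos _).trans_le hl'
  rw [min_eq_right ((Real.log_le_iff_le_exp hpos).2 hu'),
    max_eq_right ((Real.le_log_iff_exp_le hpos).2 hl'), Real.exp_log hpos,
    ENNReal.ofReal_toReal hne]

open ProbabilityTheory in
/-- Inductive step: adding one more private kernel. -/
lemma GoodPair.compProd {H Y : Type*} [MeasurableSpace H] [MeasurableSpace Y]
    {P Q : Measure H} [IsProbabilityMeasure P] [IsProbabilityMeasure Q] {ε : ℝ} {n : ℕ}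
    (hε : 0 ≤ ε) (hPQ : GoodPair P Q ε n) (p q : Kernel H Y) [IsMarkovKernel p] [IsMarkovKernel q]
    (h1 : ∀ h E, MeasurableSet E → p h E ≤ ENNReal.ofReal (Real.exp ε) * q h E)
    (h2 : ∀ h E, MeasurableSet E → q h E ≤ ENNReal.ofReal (Real.exp ε) * p h E) :
    GoodPair (P.compProd p) (Q.compProd q) ε (n + 1) := by
  obtain ⟨L, hL, hLb, hPL, hLm⟩ := hPQ
  have dom : ∀ (a b : Kernel H Y) [IsMarkovKernel a] [IsMarkovKernel b],
      (∀ h E, MeasurableSet E → a h E ≤ ENNReal.ofReal (Real.exp ε) * b h E) →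
      ∀ E, MeasurableSet E →
        (P.compProd a) E ≤ ENNReal.ofReal (Real.exp ε) * (P.compProd b) E := by
    intro a b _ _ hab E hE
    rw [Measure.compProd_apply hE, Measure.compProd_apply hE,
      ← lintegral_const_mul _ (Kernel.measurable_kernel_prodMk_left hE)]
    exact lintegral_mono fun h => hab h _ (measurable_prodMk_left hE)
  obtain ⟨l, hl, hlb, hPl⟩ := exists_log_density (P.compProd p) (P.compProd q) ε hε
    (dom p q h1) (dom q p h2)
  have hel : Measurable fun z => ENNReal.ofReal (Real.exp (l z)) := by fun_prop
  have hone : ∀ᵐ h ∂P, ∫⁻ y, ENNReal.ofReal (Real.exp (l (h, y))) ∂(q h) = 1 := by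
    refine ae_eq_of_forall_setLIntegral_eq_of_sigmaFinite (μ := P) (g := fun _ => 1)
      hel.lintegral_kernel_prod_right' measurable_const fun s hs _ => ?_
    have e1 : (P.compProd p) (s ×ˢ Set.univ) = P s := by
      rw [Measure.compProd_apply_prod hs MeasurableSet.univ]; simp
    rw [hPl, withDensity_apply _ (hs.prod MeasurableSet.univ),
      Measure.setLIntegral_compProd hel hs MeasurableSet.univ] at e1
    simpa using e1
  have hR : P.compProd q =
      (Q.compProd q).withDensity (fun z => ENNReal.ofReal (Real.exp (L z.1))) := by
    ext s hs
    rw [withDensity_apply _ hs, Measure.compProd_apply hs, hPL,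
      lintegral_withDensity_eq_lintegral_mul _ (by fun_prop)
        (Kernel.measurable_kernel_prodMk_left hs), ← lintegral_indicator hs,
      Measure.lintegral_compProd (Measurable.indicator (by fun_prop) hs)]
    refine lintegral_congr fun h => ?_
    have : ∀ y, s.indicator (fun z : H × Y => ENNReal.ofReal (Real.exp (L z.1))) (h, y) =
        (Prod.mk h ⁻¹' s).indicator (fun _ => ENNReal.ofReal (Real.exp (L h))) y := fun y => rfl
    simp_rw [this]
    rw [lintegral_indicator_const (measurable_prodMk_left hs)]
    rfl
  refine ⟨fun z => L z.1 + l z, by fun_prop, fun z => ?_, ?_, fun c hc => ?_⟩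
  · have := hLb z.1
    have := (hlb z).2
    push_cast
    linarith
  · rw [hPl, hR, ← withDensity_mul _ (by fun_prop) (by fun_prop)]
    congr 1
    ext z
    rw [Pi.mul_apply, ← ENNReal.ofReal_mul (Real.exp_pos _).le, ← Real.exp_add]
  · set B := c * (ε * (Real.exp ε - 1)) + c ^ 2 * ε ^ 2 / 2 with hB
    have hpt : ∀ z : H × Y, ENNReal.ofReal (Real.exp (l z)) *
        ENNReal.ofReal (Real.exp (c * (L z.1 + l z))) =
        ENNReal.ofReal (Real.exp (c * L z.1)) * (ENNReal.ofReal (Real.exp (l z)) *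
          ENNReal.ofReal (Real.exp (c * l z))) := by
      intro z
      rw [mul_add, Real.exp_add, ENNReal.ofReal_mul (Real.exp_pos _).le]
      ring
    calc ∫⁻ z, ENNReal.ofReal (Real.exp (c * (L z.1 + l z))) ∂(P.compProd p)
        = ∫⁻ z, ENNReal.ofReal (Real.exp (c * L z.1)) * (ENNReal.ofReal (Real.exp (l z)) *
          ENNReal.ofReal (Real.exp (c * l z))) ∂(P.compProd q) := by
          have hm2 : Measurable fun z : H × Y =>
              ENNReal.ofReal (Real.exp (c * (L z.1 + l z))) := by fun_prop
          rw [hPl, lintegral_withDensity_eq_lintegral_mul _ hel hm2]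
          exact lintegral_congr hpt
      _ = ∫⁻ h, ENNReal.ofReal (Real.exp (c * L h)) * ∫⁻ y, (ENNReal.ofReal (Real.exp (l (h, y))) *
          ENNReal.ofReal (Real.exp (c * l (h, y)))) ∂(q h) ∂P := by
          rw [Measure.lintegral_compProd (by fun_prop)]
          refine lintegral_congr fun h => ?_
          dsimp only
          rw [lintegral_const_mul]
          fun_prop
      _ ≤ ∫⁻ h, ENNReal.ofReal (Real.exp (c * L h)) * ENNReal.ofReal (Real.exp B) ∂P := by
          refine lintegral_mono_ae ?_
          filter_upwards [hone] with h hh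
          gcongr
          exact one_step_moment (q h) ε hε (fun y => l (h, y)) (by fun_prop)
            (fun y => hlb _) hh c hc
      _ ≤ ENNReal.ofReal (Real.exp (n * B)) * ENNReal.ofReal (Real.exp B) := by
          rw [lintegral_mul_const _ (by fun_prop)]
          gcongr
          exact hLm c hc
      _ = _ := by
          rw [← ENNReal.ofReal_mul (Real.exp_pos _).le, ← Real.exp_add]
          congr 2
          push_cast
          ring

/-- Transport of a good pair along a map with a measurable left inverse. -/
lemma GoodPair.map {Ω Ω' : Type*} [MeasurableSpace Ω] [MeasurableSpace Ω'] {P Q : Measure Ω}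
    {ε : ℝ} {n : ℕ} (hPQ : GoodPair P Q ε n) (f : Ω → Ω') (hf : Measurable f) (g : Ω' → Ω)
    (hg : Measurable g) (hgf : ∀ ω, g (f ω) = ω) : GoodPair (P.map f) (Q.map f) ε n := by
  obtain ⟨L, hL, hLb, hPL, hLm⟩ := hPQ
  refine ⟨fun z => L (g z), by fun_prop, fun z => hLb _, ?_, fun c hc => ?_⟩
  · ext s hs
    rw [withDensity_apply _ hs, setLIntegral_map hs (by fun_prop) hf, Measure.map_apply hf hs]
    simp_rw [hgf]
    rw [← withDensity_apply _ (hf hs), ← hPL]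
  · rw [lintegral_map (by fun_prop) hf]
    simp_rw [hgf]
    exact hLm c hc

/-- A good pair satisfies the differential-privacy inequality. -/
lemma GoodPair.dp {Ω : Type*} [MeasurableSpace Ω] {P Q : Measure Ω} {ε : ℝ} {n : ℕ}
    (hε : 0 ≤ ε) (hn : 1 ≤ n) (hPQ : GoodPair P Q ε n) (δ : ℝ) (hδ : δ ∈ Set.Ioo (0 : ℝ) 1)
    (E : Set Ω) (hE : MeasurableSet E) :
    P E ≤ ENNReal.ofReal (Real.exp (ε * Real.sqrt (2 * n * Real.log (1 / δ)) +
        n * ε * (Real.exp ε - 1))) * Q E + ENNReal.ofReal δ := by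
  obtain ⟨L, hL, hLb, hPL, hLm⟩ := hPQ
  set s := Real.sqrt (2 * n * Real.log (1 / δ)) with hs
  set tot := ε * s + n * ε * (Real.exp ε - 1) with htot
  have hA : MeasurableSet {ω | L ω ≤ tot} := measurableSet_le hL measurable_const
  have hn0 : (0 : ℝ) < n := by exact_mod_cast hn
  have hlog : 0 < Real.log (1 / δ) := Real.log_pos (by rw [lt_div_iff₀ hδ.1]; linarith [hδ.2])
  have hs2 : s ^ 2 = 2 * n * Real.log (1 / δ) := Real.sq_sqrt (by positivity)
  have hs0 : 0 ≤ s := Real.sqrt_nonneg _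
  have part1 : P (E ∩ {ω | L ω ≤ tot}) ≤ ENNReal.ofReal (Real.exp tot) * Q E := by
    rw [hPL, withDensity_apply _ (hE.inter hA)]
    calc _ ≤ ∫⁻ ω in E ∩ {ω | L ω ≤ tot}, ENNReal.ofReal (Real.exp tot) ∂Q := by
          refine setLIntegral_mono measurable_const fun ω hω => ?_
          exact ENNReal.ofReal_le_ofReal (Real.exp_le_exp.2 hω.2)
      _ = ENNReal.ofReal (Real.exp tot) * Q (E ∩ {ω | L ω ≤ tot}) := setLIntegral_const _ _
      _ ≤ _ := by gcongr; exact Set.inter_subset_left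
  have part2 : P (E \ {ω | L ω ≤ tot}) ≤ ENNReal.ofReal δ := by
    rcases hε.eq_or_lt with h0 | h0
    · have : {ω | L ω ≤ tot} = Set.univ := by
        ext ω
        have := hLb ω
        simp [htot, ← h0] at this ⊢
        exact this
      rw [this]; simp
    · set c := s / (n * ε) with hc
      have hc0 : 0 ≤ c := by positivity
      have hsubset : E \ {ω | L ω ≤ tot} ⊆ {ω | ENNReal.ofReal (Real.exp (c * tot)) ≤
          ENNReal.ofReal (Real.exp (c * L ω))} := by
        intro ω hω
        have : tot < L ω := not_le.1 hω.2
        exact ENNReal.ofReal_le_ofReal (Real.exp_le_exp.2 (by gcongr))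
      refine (measure_mono hsubset).trans ?_
      refine (meas_ge_le_lintegral_div (by fun_prop) (by simp [Real.exp_pos]) (by simp)).trans ?_
      refine (ENNReal.div_le_div_right (hLm c hc0) _).trans ?_
      rw [← ENNReal.ofReal_div_of_pos (Real.exp_pos _), ← Real.exp_sub]
      refine ENNReal.ofReal_le_ofReal ?_
      rw [← Real.le_log_iff_exp_le hδ.1]
      have hl2 : Real.log (1 / δ) = - Real.log δ := by simp
      have : n * (c * (ε * (Real.exp ε - 1)) + c ^ 2 * ε ^ 2 / 2) - c * tot =
          - s ^ 2 / (2 * n) := by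
        rw [htot, hc]; field_simp; ring
      rw [this, hs2, hl2]
      field_simp
      exact le_rfl
  calc P E = P (E ∩ {ω | L ω ≤ tot}) + P (E \ {ω | L ω ≤ tot}) := (measure_inter_add_sdiff E hA).symm
    _ ≤ _ := add_le_add part1 part2

lemma Neighboring.symm' {Z : Type*} {N : ℕ} {S S' : Fin N → Z} (h : Neighboring S S') :
    Neighboring S' S := by
  obtain ⟨i, hi⟩ := h
  exact ⟨i, fun j hj => (hi j hj).symm⟩

/-- The joint map `(h, x) ↦ snoc h x`. -/
def snocPair (X : ℕ → Type*) (n : ℕ) (z : (∀ s : Fin n, X s) × X n) : ∀ t : Fin (n + 1), X t :=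
  @Fin.snoc n (fun i : Fin (n + 1) => X i) z.1 z.2

/-- The inverse of `snocPair`. -/
def unsnocPair (X : ℕ → Type*) (n : ℕ) (w : ∀ t : Fin (n + 1), X t) : (∀ s : Fin n, X s) × X n :=
  (fun s => w s.castSucc, w (Fin.last n))

lemma unsnoc_snoc (X : ℕ → Type*) (n : ℕ) (z : (∀ s : Fin n, X s) × X n) :
    unsnocPair X n (snocPair X n z) = z := by
  refine Prod.ext ?_ ?_
  · funext s
    exact Fin.snoc_castSucc (α := fun i : Fin (n + 1) => X i) z.2 z.1 s
  · exact Fin.snoc_last (α := fun i : Fin (n + 1) => X i) z.2 z.1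

lemma measurable_unsnocPair (X : ℕ → Type*) [∀ t, MeasurableSpace (X t)] (n : ℕ) :
    Measurable (unsnocPair X n) := by
  refine Measurable.prodMk ?_ ?_
  · exact measurable_pi_lambda _ fun s => measurable_pi_apply s.castSucc
  · exact measurable_pi_apply (Fin.last n)

lemma measurable_snocPair (X : ℕ → Type*) [∀ t, MeasurableSpace (X t)] (n : ℕ) :
    Measurable (snocPair X n) := by
  refine measurable_pi_lambda _ fun t => ?_
  refine Fin.lastCases ?_ (fun s => ?_) t
  · have : (fun z => snocPair X n z (Fin.last n)) = fun z => z.2 := by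
      funext z
      exact Fin.snoc_last (α := fun i : Fin (n + 1) => X i) z.2 z.1
    rw [this]
    exact measurable_snd
  · have : (fun z => snocPair X n z s.castSucc) = fun z => z.1 s := by
      funext z
      exact Fin.snoc_castSucc (α := fun i : Fin (n + 1) => X i) z.2 z.1 s
    rw [this]
    exact (measurable_pi_apply s).comp measurable_fst

open ProbabilityTheory in
lemma bind_snoc_eq (X : ℕ → Type*) [∀ t, MeasurableSpace (X t)] (n : ℕ)
    (μ : Measure (∀ s : Fin n, X s)) [IsProbabilityMeasure μ]
    (k : Kernel (∀ s : Fin n, X s) (X n)) [IsMarkovKernel k] :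
    μ.bind (fun h => (k h).map (fun x => @Fin.snoc n (fun i : Fin (n + 1) => X i) h x)) =
      (μ.compProd k).map (snocPair X n) := by
  have hm := measurable_snocPair X n
  have hmh : ∀ h, Measurable (fun x : X n => snocPair X n (h, x)) := fun h =>
    hm.comp measurable_prodMk_left
  have happ : ∀ h (E : Set (∀ t : Fin (n + 1), X t)), MeasurableSet E →
      (k h).map (fun x => snocPair X n (h, x)) E = k h (Prod.mk h ⁻¹' (snocPair X n ⁻¹' E)) := by
    intro h E hE
    rw [Measure.map_apply (hmh h) hE]
    rfl
  have hmeas : Measurable fun h => (k h).map (fun x => snocPair X n (h, x)) := by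
    refine Measure.measurable_of_measurable_coe _ fun E hE => ?_
    simp_rw [happ _ E hE]
    exact Kernel.measurable_kernel_prodMk_left (hm hE)
  change μ.bind (fun h => (k h).map (fun x => snocPair X n (h, x))) = _
  ext E hE
  rw [Measure.bind_apply hE hmeas.aemeasurable, Measure.map_apply hm hE,
    Measure.compProd_apply (hm hE)]
  exact lintegral_congr fun h => happ h E hE

/-- adaptive strong composition: if for each `t < T` and every
fixed history `(o₁,…,o_{t−1})` the kernel `S ↦ κ_t(S, o₁,…,o_{t−1})` is
`(ε₀, 0)`-differentially private, then the adaptively composed kernel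
`S ↦ law of (O₁,…,O_T)`, where `O_t ∼ κ_t(S, O₁,…,O_{t−1})`, is
`(ε, δ̂)`-differentially private with
`ε = ε₀·√(2·T·log(1/δ̂)) + T·ε₀·(e^{ε₀} − 1)`. -/
theorem stmt4 {Z : Type*} [MeasurableSpace Z] (N T : ℕ) (hN : 1 ≤ N) (hT : 1 ≤ T)
    (X : ℕ → Type*) [∀ t, MeasurableSpace (X t)]
    (κ : ∀ t : ℕ, (Fin N → Z) → (∀ s : Fin t, X s) → Measure (X t))
    (hκmeas : ∀ t : ℕ,
      Measurable (fun q : (Fin N → Z) × (∀ s : Fin t, X s) => κ t q.1 q.2))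
    (hκprob : ∀ (t : ℕ) (S : Fin N → Z) (h : ∀ s : Fin t, X s),
      IsProbabilityMeasure (κ t S h))
    (ε₀ : ℝ) (hε₀ : 0 ≤ ε₀)
    (hDP : ∀ t < T, ∀ h : ∀ s : Fin t, X s, IsDP (fun S => κ t S h) ε₀ 0)
    (δhat : ℝ) (hδhat : δhat ∈ Set.Ioo (0 : ℝ) 1) :
    IsDP (fun S => composedMeasure X κ S T)
      (ε₀ * Real.sqrt (2 * T * Real.log (1 / δhat)) +
        T * ε₀ * (Real.exp ε₀ - 1))
      δhat := by
  intro S S' hSS E hE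
  let k : (R : Fin N → Z) → (t : ℕ) → ProbabilityTheory.Kernel (∀ s : Fin t, X s) (X t) :=
    fun R t => ⟨fun h => κ t R h, (hκmeas t).comp measurable_prodMk_left⟩
  have hk : ∀ R t, ProbabilityTheory.IsMarkovKernel (k R t) := fun R t => ⟨fun h => hκprob t R h⟩
  have hstep : ∀ R n, IsProbabilityMeasure (composedMeasure X κ R n) →
      composedMeasure X κ R (n + 1) =
        ((composedMeasure X κ R n).compProd (k R n)).map (snocPair X n) := by
    intro R n _
    exact bind_snoc_eq X n (composedMeasure X κ R n) (k R n)
  have hprob : ∀ R n, IsProbabilityMeasure (composedMeasure X κ R n) := by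
    intro R n
    induction n with
    | zero => rw [composedMeasure]; infer_instance
    | succ n ih =>
      rw [hstep R n ih]
      exact Measure.isProbabilityMeasure_map (measurable_snocPair X n).aemeasurable
  have main : ∀ n, n ≤ T →
      GoodPair (composedMeasure X κ S n) (composedMeasure X κ S' n) ε₀ n := by
    intro n
    induction n with
    | zero =>
      intro _
      refine ⟨fun _ => 0, measurable_const, by simp, ?_, ?_⟩
      · simp [composedMeasure]
      · intro c hc
        simp [composedMeasure]
    | succ n ih =>
      intro hnT
      have := hprob S n
      have := hprob S' n
      rw [hstep S n (hprob S n), hstep S' n (hprob S' n)]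
      refine GoodPair.map ?_ _ (measurable_snocPair X n) _ (measurable_unsnocPair X n)
        (unsnoc_snoc X n)
      refine (ih (by omega)).compProd hε₀ (k S n) (k S' n) ?_ ?_
      · intro h A hA
        have := hDP n (by omega) h S S' hSS A hA
        rw [ENNReal.ofReal_zero, add_zero] at this
        exact this
      · intro h A hA
        have := hDP n (by omega) h S' S hSS.symm' A hA
        rw [ENNReal.ofReal_zero, add_zero] at this
        exact this
  exact (main T le_rfl).dp hε₀ hT δhat hδhat E hE
end

section
/- (KL bound for pure differential privacy, the source of the T·ε₀·(e^{ε₀} − 1) term in the strong composition formula.) Let P and Q be probability measures on a measurable space X and let ε₀ ≥ 0. Suppose that for every measurable set E ⊆ X, P(E) ≤ e^{ε₀}·Q(E) and Q(E) ≤ e^{ε₀}·P(E). Then the Kullback–Leibler divergence satisfies KL(P ‖ Q) ≤ ε₀·(e^{ε₀} − 1). -/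
open MeasureTheory

/-- If probability measures `P, Q` on a measurable space `X` satisfy
`P(E) ≤ e^{ε₀}·Q(E)` and `Q(E) ≤ e^{ε₀}·P(E)` for every measurable `E` (the
multiplicative closeness of an `(ε₀,0)`-DP mechanism on neighboring datasets),
then the Kullback–Leibler divergence `KL(P‖Q) = ∫ log(dP/dQ) dP` is at most
`ε₀·(e^{ε₀} − 1)`. -/
theorem stmt9 {X : Type*} [MeasurableSpace X] (P Q : Measure X)
    [IsProbabilityMeasure P] [IsProbabilityMeasure Q]
    (ε₀ : ℝ) (hε₀ : 0 ≤ ε₀)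
    (hPQ : ∀ E : Set X, MeasurableSet E →
      P E ≤ ENNReal.ofReal (Real.exp ε₀) * Q E)
    (hQP : ∀ E : Set X, MeasurableSet E →
      Q E ≤ ENNReal.ofReal (Real.exp ε₀) * P E) :
    ∫ x, Real.log ((P.rnDeriv Q x).toReal) ∂P ≤ ε₀ * (Real.exp ε₀ - 1) := by
  set c : ENNReal := ENNReal.ofReal (Real.exp ε₀) with hc
  have hac : P ≪ Q := by
    refine Measure.AbsolutelyContinuous.mk fun s hs h0 => ?_
    have := hPQ s hs
    rw [h0, mul_zero] at this
    exact le_antisymm this (zero_le)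
  have hm := Measure.measurable_rnDeriv P Q
  have h1 : P.rnDeriv Q ≤ᵐ[Q] fun _ => c := by
    refine ae_le_of_forall_setLIntegral_le_of_sigmaFinite hm fun s hs _ => ?_
    rw [Measure.setLIntegral_rnDeriv hac, setLIntegral_const]
    exact hPQ s hs
  have h2 : (fun _ => (1 : ENNReal)) ≤ᵐ[Q] fun x => c * P.rnDeriv Q x := by
    refine ae_le_of_forall_setLIntegral_le_of_sigmaFinite measurable_const fun s hs _ => ?_
    rw [lintegral_const_mul _ hm, Measure.setLIntegral_rnDeriv hac, setLIntegral_const, one_mul]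
    exact hQP s hs
  have hb : ∀ᵐ x ∂Q, (P.rnDeriv Q x).toReal ≤ Real.exp ε₀ ∧ 
      1 ≤ Real.exp ε₀ * (P.rnDeriv Q x).toReal := by
    filter_upwards [h1, h2] with x hx1 hx2
    have hx1 : P.rnDeriv Q x ≤ c := hx1
    have hx2 : 1 ≤ c * P.rnDeriv Q x := hx2
    have hf : P.rnDeriv Q x ≠ ⊤ := ne_top_of_le_ne_top ENNReal.ofReal_ne_top hx1
    have hct : c.toReal = Real.exp ε₀ := ENNReal.toReal_ofReal (Real.exp_pos _).le
    constructor
    · rw [← hct]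
      exact ENNReal.toReal_mono ENNReal.ofReal_ne_top hx1
    · rw [← hct, ← ENNReal.toReal_mul, ← ENNReal.toReal_one]
      exact ENNReal.toReal_mono (ENNReal.mul_ne_top ENNReal.ofReal_ne_top hf) hx2
  have hlog : ∀ y : ℝ, y ≤ Real.exp ε₀ → 1 ≤ Real.exp ε₀ * y → 0 < y ∧ |Real.log y| ≤ ε₀ := by
    intro y h1 h2
    have he := Real.exp_pos ε₀
    have hy : 0 < y := by
      by_contra h
      nlinarith
    refine ⟨hy, abs_le.2 ⟨?_, ?_⟩⟩
    · rw [Real.le_log_iff_exp_le hy, Real.exp_neg, inv_le_iff_one_le_mul₀ he]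
      linarith
    · exact (Real.log_le_iff_le_exp hy).2 h1
  rw [show (fun x => Real.log ((P.rnDeriv Q x).toReal)) = llr P Q from rfl] 
  rw [← integral_rnDeriv_mul_log hac]
  have hi := Measure.integrable_toReal_rnDeriv (μ := P) (ν := Q)
  have hint : Integrable (fun x => (P.rnDeriv Q x).toReal * Real.log (P.rnDeriv Q x).toReal) Q := by
    refine Integrable.of_bound (C := Real.exp ε₀ * ε₀) ?_ ?_
    · exact (hm.ennreal_toReal.mul hm.ennreal_toReal.log).aestronglyMeasurable
    · filter_upwards [hb] with x hx
      obtain ⟨hy, hl⟩ := hlog _ hx.1 hx.2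
      rw [Real.norm_eq_abs, abs_mul, abs_of_pos hy]
      exact mul_le_mul hx.1 hl (abs_nonneg _) (Real.exp_pos _).le
  calc _ ≤ ∫ x, (ε₀ * (Real.exp ε₀ - 1) - 1 + (P.rnDeriv Q x).toReal) ∂Q := by
        refine integral_mono_ae hint ((integrable_const _).add hi) ?_
        filter_upwards [hb] with x hx
        obtain ⟨hy, hl⟩ := hlog _ hx.1 hx.2
        generalize (P.rnDeriv Q x).toReal = y at *
        have h3 := Real.log_le_sub_one_of_pos hy
        have he : 1 ≤ Real.exp ε₀ := Real.one_le_exp hε₀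
        have h4 : |y - 1| ≤ Real.exp ε₀ - 1 := by
          rw [abs_le]
          constructor
          · nlinarith [sq_nonneg (Real.exp ε₀ - 1)]
          · linarith [hx.1]
        have h5 : (y - 1) * Real.log y ≤ (Real.exp ε₀ - 1) * ε₀ := by
          refine (le_abs_self _).trans ?_
          rw [abs_mul]
          exact mul_le_mul h4 hl (abs_nonneg _) (by linarith)
        show y * Real.log y ≤ ε₀ * (Real.exp ε₀ - 1) - 1 + y
        linarith
    _ = _ := by
        rw [integral_add (integrable_const _) hi, Measure.integral_toReal_rnDeriv hac]
        simp
end
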